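/- Suppose H_A = C^d, Alice's measurement is the full Bell state measurement {M_a = (U_a ⊗ 1)Φ+(U_a† ⊗ 1)}_{a=0}^{d²−1} with {U_a} the Heisenberg–Weyl unitaries, and the input set {ω_x} is tomographically complete. Then the random teleportation robustness of the resulting assemblage equals the random entanglement robustness of the shared state: τ_r({σ_{a|ω_x}}) = ε_r(ρ^{AB}). -/

import Mathlib

open Matrix ComplexOrder
open scoped Kronecker

namespace Tele

noncomputable def ptrace₁ {V B : Type*} [Fintype V]
    (M : Matrix (V × B) (V × B) ℂ) : Matrix B B ℂ :=
  Matrix.of fun b b' => ∑ v, M (v, b) (v, b')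

noncomputable def ptrace₂ {V B : Type*} [Fintype B]
    (M : Matrix (V × B) (V × B) ℂ) : Matrix V V ℂ :=
  Matrix.of fun v v' => ∑ b, M (v, b) (v', b)

noncomputable def ptraceMid {V A B : Type*} [Fintype A]
    (M : Matrix (V × A × B) (V × A × B) ℂ) : Matrix (V × B) (V × B) ℂ :=
  Matrix.of fun p q => ∑ a, M (p.1, a, p.2) (q.1, a, q.2)

noncomputable def ptraceVA {V A B : Type*} [Fintype V] [Fintype A]
    (M : Matrix (V × A × B) (V × A × B) ℂ) : Matrix B B ℂ :=
  Matrix.of fun b b' => ∑ v, ∑ a, M (v, a, b) (v, a, b')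

noncomputable def ptraceV₁A {V V₁ A B : Type*} [Fintype V₁] [Fintype A]
    (M : Matrix (V × V₁ × A × B) (V × V₁ × A × B) ℂ) : Matrix (V × B) (V × B) ℂ :=
  Matrix.of fun p q => ∑ v₁, ∑ a, M (p.1, v₁, a, p.2) (q.1, v₁, a, q.2)

def ptranspose₁ {V B : Type*} (M : Matrix (V × B) (V × B) ℂ) : Matrix (V × B) (V × B) ℂ :=
  Matrix.of fun p q => M (q.1, p.2) (p.1, q.2)

def ptranspose₂ {V B : Type*} (M : Matrix (V × B) (V × B) ℂ) : Matrix (V × B) (V × B) ℂ :=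
  Matrix.of fun p q => M (p.1, q.2) (q.1, p.2)

def Separable {V B : Type*} [Fintype V] [Fintype B]
    (M : Matrix (V × B) (V × B) ℂ) : Prop :=
  ∃ (n : ℕ) (τ : Fin n → Matrix V V ℂ) (χ : Fin n → Matrix B B ℂ),
    (∀ i, (τ i).PosSemidef) ∧ (∀ i, (χ i).PosSemidef) ∧ M = ∑ i, τ i ⊗ₖ χ i

def IsState {V : Type*} [Fintype V] (ρ : Matrix V V ℂ) : Prop :=
  ρ.PosSemidef ∧ ρ.trace = 1

noncomputable def maxEnt (d : ℕ) : Matrix (Fin d × Fin d) (Fin d × Fin d) ℂ :=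
  Matrix.of fun p q => if p.1 = p.2 ∧ q.1 = q.2 then (d : ℂ)⁻¹ else 0

noncomputable def chanOp {V A B : Type*} [Fintype V] [Fintype A] [Fintype B]
    [DecidableEq V] [DecidableEq B]
    (M : Matrix (V × A) (V × A) ℂ) (ρ : Matrix (A × B) (A × B) ℂ) :
    Matrix (V × B) (V × B) ℂ :=
  ptraceMid ((Matrix.reindex (Equiv.prodAssoc V A B) (Equiv.prodAssoc V A B)
      (M ⊗ₖ (1 : Matrix B B ℂ))) * ((1 : Matrix V V ℂ) ⊗ₖ ρ))

noncomputable def teleA {V A B : Type*} [Fintype V] [Fintype A] [Fintype B] [DecidableEq B]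
    (M : Matrix (V × A) (V × A) ℂ) (ρ : Matrix (A × B) (A × B) ℂ) (ω : Matrix V V ℂ) :
    Matrix B B ℂ :=
  ptraceVA ((Matrix.reindex (Equiv.prodAssoc V A B) (Equiv.prodAssoc V A B)
      (M ⊗ₖ (1 : Matrix B B ℂ))) * (ω ⊗ₖ ρ))

noncomputable def margOp {V A : Type*} [Fintype V] [Fintype A] [DecidableEq V]
    (M : Matrix (V × A) (V × A) ℂ) (ρA : Matrix A A ℂ) : Matrix V V ℂ :=
  ptrace₂ (M * ((1 : Matrix V V ℂ) ⊗ₖ ρA))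

noncomputable def piOp {A B : Type*} [Fintype A] [Fintype B] [DecidableEq B]
    (χ : Matrix A A ℂ) (ρ : Matrix (A × B) (A × B) ℂ) : Matrix B B ℂ :=
  ptrace₁ ((χ ⊗ₖ (1 : Matrix B B ℂ)) * ρ)

def TomoComplete {V X : Type*} [Fintype V] (ω : X → Matrix V V ℂ) : Prop :=
  ∀ H : Matrix V V ℂ, H.IsHermitian → H ∈ Submodule.span ℝ (Set.range ω)

noncomputable def shiftX (d : ℕ) : Matrix (Fin d) (Fin d) ℂ :=
  Matrix.of fun i j => if (i : ℕ) = ((j : ℕ) + 1) % d then 1 else 0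

noncomputable def clockZ (d : ℕ) : Matrix (Fin d) (Fin d) ℂ :=
  Matrix.of fun i j =>
    if i = j then Complex.exp (2 * (Real.pi : ℂ) * Complex.I * ((i : ℕ) : ℂ) / (d : ℂ)) else 0

noncomputable def HW (d : ℕ) (a : Fin d × Fin d) : Matrix (Fin d) (Fin d) ℂ :=
  shiftX d ^ (a.1 : ℕ) * clockZ d ^ (a.2 : ℕ)

noncomputable def bellPOVM (d : ℕ) (a : Fin d × Fin d) :
    Matrix (Fin d × Fin d) (Fin d × Fin d) ℂ :=
  (HW d a ⊗ₖ (1 : Matrix (Fin d) (Fin d) ℂ)) * maxEnt d *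
    ((HW d a)ᴴ ⊗ₖ (1 : Matrix (Fin d) (Fin d) ℂ))

noncomputable def negativity {A B : Type*} [Fintype A] [Fintype B]
    (ρ : Matrix (A × B) (A × B) ℂ) : ℝ :=
  sInf {t : ℝ | ∃ ρp ρm : Matrix (A × B) (A × B) ℂ,
    ρ = ρp - ρm ∧ (ptranspose₁ ρp).PosSemidef ∧ (ptranspose₁ ρm).PosSemidef ∧
    t = (ρm.trace).re}

noncomputable def epsGen {A B : Type*} [Fintype A] [Fintype B]
    (ρ : Matrix (A × B) (A × B) ℂ) : ℝ :=
  sInf {r : ℝ | 0 ≤ r ∧ ∃ ρs : Matrix (A × B) (A × B) ℂ, IsState ρs ∧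
    Separable ((((1 + r : ℝ) : ℂ))⁻¹ • (ρ + ((r : ℝ) : ℂ) • ρs))}

noncomputable def epsSep {A B : Type*} [Fintype A] [Fintype B]
    (ρ : Matrix (A × B) (A × B) ℂ) : ℝ :=
  sInf {r : ℝ | 0 ≤ r ∧ ∃ ρs : Matrix (A × B) (A × B) ℂ, IsState ρs ∧ Separable ρs ∧
    Separable ((((1 + r : ℝ) : ℂ))⁻¹ • (ρ + ((r : ℝ) : ℂ) • ρs))}

noncomputable def epsR {A B : Type*} [Fintype A] [Fintype B] [DecidableEq A] [DecidableEq B]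
    (ρ : Matrix (A × B) (A × B) ℂ) : ℝ :=
  sInf {r : ℝ | 0 ≤ r ∧
    Separable ((((1 + r : ℝ) : ℂ))⁻¹ •
      (ρ + ((r : ℝ) : ℂ) • ((Fintype.card (A × B) : ℂ)⁻¹ • (1 : Matrix (A × B) (A × B) ℂ))))}

noncomputable def epsBSA {A B : Type*} [Fintype A] [Fintype B]
    (ρ : Matrix (A × B) (A × B) ℂ) : ℝ :=
  sInf {p : ℝ | 0 ≤ p ∧ p ≤ 1 ∧ ∃ ρs σS : Matrix (A × B) (A × B) ℂ,
    IsState ρs ∧ IsState σS ∧ Separable σS ∧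
    ρ = ((p : ℝ) : ℂ) • ρs + (((1 - p : ℝ)) : ℂ) • σS}

noncomputable def tauGen {V B X ι : Type*} [Fintype V] [Fintype B] [Fintype ι]
    [DecidableEq V] [DecidableEq B]
    (ω : X → Matrix V V ℂ) (σ : ι → X → Matrix B B ℂ) : ℝ :=
  sInf {r : ℝ | 0 ≤ r ∧ ∃ (m : ℕ) (ρs : Matrix (Fin m × B) (Fin m × B) ℂ)
      (N : ι → Matrix (V × Fin m) (V × Fin m) ℂ) (Ms : ι → Matrix (V × B) (V × B) ℂ),
      IsState ρs ∧ (∀ a, (N a).PosSemidef) ∧ ((∑ a, N a) = 1) ∧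
      (∀ a, (Ms a).PosSemidef ∧ Separable (Ms a)) ∧
      (∀ a x, (((1 + r : ℝ) : ℂ))⁻¹ • (σ a x + ((r : ℝ) : ℂ) • teleA (N a) ρs (ω x)) =
        ptrace₁ (Ms a * (ω x ⊗ₖ (1 : Matrix B B ℂ)))) ∧
      (∀ x, (∑ a, Ms a) = (1 : Matrix V V ℂ) ⊗ₖ
        ((((1 + r : ℝ) : ℂ))⁻¹ •
          ((∑ a, σ a x) + ((r : ℝ) : ℂ) • ∑ a, teleA (N a) ρs (ω x))))}

noncomputable def tauCl {V B X ι : Type*} [Fintype V] [Fintype B] [Fintype ι]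
    [DecidableEq V] [DecidableEq B]
    (ω : X → Matrix V V ℂ) (σ : ι → X → Matrix B B ℂ) : ℝ :=
  sInf {r : ℝ | 0 ≤ r ∧ ∃ (Mb Ms : ι → Matrix (V × B) (V × B) ℂ),
    (∀ a, (Mb a).PosSemidef ∧ Separable (Mb a)) ∧
    (∀ a, (Ms a).PosSemidef ∧ Separable (Ms a)) ∧
    (∀ x, (∑ a, Mb a) = (1 : Matrix V V ℂ) ⊗ₖ
      (∑ a, ptrace₁ (Mb a * (ω x ⊗ₖ (1 : Matrix B B ℂ))))) ∧
    (∀ a x, (((1 + r : ℝ) : ℂ))⁻¹ •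
        (σ a x + ((r : ℝ) : ℂ) • ptrace₁ (Mb a * (ω x ⊗ₖ (1 : Matrix B B ℂ)))) =
      ptrace₁ (Ms a * (ω x ⊗ₖ (1 : Matrix B B ℂ)))) ∧
    (∀ x, (∑ a, Ms a) = (1 : Matrix V V ℂ) ⊗ₖ
      ((((1 + r : ℝ) : ℂ))⁻¹ •
        ((∑ a, σ a x) + ((r : ℝ) : ℂ) •
          ∑ a, ptrace₁ (Mb a * (ω x ⊗ₖ (1 : Matrix B B ℂ))))))}

noncomputable def tauR {V B X ι : Type*} [Fintype V] [Fintype B] [Fintype ι]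
    [DecidableEq V] [DecidableEq B]
    (ω : X → Matrix V V ℂ) (σ : ι → X → Matrix B B ℂ) : ℝ :=
  sInf {r : ℝ | 0 ≤ r ∧ ∃ (p : ι → ℝ) (Ms : ι → Matrix (V × B) (V × B) ℂ),
    (∀ a, 0 ≤ p a) ∧ ((∑ a, p a) = 1) ∧
    (∀ a, (Ms a).PosSemidef ∧ Separable (Ms a)) ∧
    (∀ a x, (((1 + r : ℝ) : ℂ))⁻¹ •
        (σ a x + ((r * p a : ℝ) : ℂ) • ((Fintype.card B : ℂ)⁻¹ • (1 : Matrix B B ℂ))) =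
      ptrace₁ (Ms a * (ω x ⊗ₖ (1 : Matrix B B ℂ)))) ∧
    (∀ x, (∑ a, Ms a) = (1 : Matrix V V ℂ) ⊗ₖ
      ((((1 + r : ℝ) : ℂ))⁻¹ •
        ((∑ a, σ a x) + ((r : ℝ) : ℂ) • ((Fintype.card B : ℂ)⁻¹ • (1 : Matrix B B ℂ)))))}

noncomputable def TW {V B X ι : Type*} [Fintype V] [Fintype B] [Fintype ι]
    [DecidableEq B]
    (ω : X → Matrix V V ℂ) (σ : ι → X → Matrix B B ℂ) : ℝ :=
  sInf {p : ℝ | 0 ≤ p ∧ p ≤ 1 ∧ ∃ (Mt Mb : ι → Matrix (V × B) (V × B) ℂ),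
    (∀ a, (Mb a).PosSemidef ∧ Separable (Mb a)) ∧
    (∀ a, (ptranspose₁ (Mt a)).PosSemidef) ∧
    (∀ x x', (∑ a, ptrace₁ (Mt a * (ω x ⊗ₖ (1 : Matrix B B ℂ)))) =
      ∑ a, ptrace₁ (Mt a * (ω x' ⊗ₖ (1 : Matrix B B ℂ)))) ∧
    (∀ a x, σ a x = ptrace₁
      ((((p : ℝ) : ℂ) • Mt a + (((1 - p : ℝ)) : ℂ) • Mb a) * (ω x ⊗ₖ (1 : Matrix B B ℂ))))}

/-!
Up to the factor `1/d`, outcome `a` of the Bell measurement acts on `V ⊗ B` through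
`ρ ↦ (U_a ⊗ 1) ρ^{T_A} (U_a† ⊗ 1)`. This map is invertible, fixes the identity and preserves
separability in both directions. Tomographically complete inputs determine `M*_a`, which is thus
the image of the noisy branch `(ρ / d + r p(a) 1/d_B) / (1 + r)`. Undoing the maps and summing over
`a` gives `d` times the noisy state of `ε_r`. Conversely, take `p(a) = 1/d²`: each branch is a
multiple of the noisy state, and the marginal condition holds because averaging over the `U_a`
replaces Alice's share by the maximally mixed state.
-/

section Separable

variable {V B : Type*} [Fintype V] [Fintype B]

theorem Separable.zero : Separable (0 : Matrix (V × B) (V × B) ℂ) :=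
  ⟨0, Fin.elim0, Fin.elim0, fun i => i.elim0, fun i => i.elim0, by simp⟩

theorem Separable.add {M N : Matrix (V × B) (V × B) ℂ}
    (hM : Separable M) (hN : Separable N) : Separable (M + N) := by
  obtain ⟨m, τ, χ, hτ, hχ, rfl⟩ := hM
  obtain ⟨n, τ', χ', hτ', hχ', rfl⟩ := hN
  refine ⟨m + n, Fin.append τ τ', Fin.append χ χ', fun i => ?_, fun i => ?_, ?_⟩
  · induction i using Fin.addCases <;> simp [hτ, hτ']
  · induction i using Fin.addCases <;> simp [hχ, hχ']
  · simp [Fin.sum_univ_add]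

theorem Separable.sum {ι : Type*} {s : Finset ι} {M : ι → Matrix (V × B) (V × B) ℂ}
    (h : ∀ i ∈ s, Separable (M i)) : Separable (∑ i ∈ s, M i) :=
  Finset.sum_induction M Separable (fun _ _ => Separable.add) Separable.zero h

theorem Separable.smul {M : Matrix (V × B) (V × B) ℂ} {c : ℂ} (hc : 0 ≤ c)
    (hM : Separable M) : Separable (c • M) := by
  obtain ⟨m, τ, χ, hτ, hχ, rfl⟩ := hM
  exact ⟨m, fun i => c • τ i, χ, fun i => (hτ i).smul hc, hχ, by
    simp only [Finset.smul_sum, smul_kronecker]⟩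

theorem Separable.posSemidef {M : Matrix (V × B) (V × B) ℂ} (hM : Separable M) :
    M.PosSemidef := by
  obtain ⟨m, τ, χ, hτ, hχ, rfl⟩ := hM
  exact posSemidef_sum _ fun i _ => (hτ i).kronecker (hχ i)

end Separable

section Response

variable {V B : Type*} [Fintype V]

theorem ptrace₁_kronecker (H : Matrix V V ℂ) (N : Matrix B B ℂ) :
    ptrace₁ (H ⊗ₖ N) = H.trace • N := by
  ext
  simp [ptrace₁, trace, Finset.sum_mul]

variable [Fintype B] [DecidableEq B]

/-- The map `ω ↦ tr_V[M (ω ⊗ 1)]` by which an operator `M` on `V ⊗ B` (a channel POVM element)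
turns Alice's input into an unnormalised state of Bob, as a bilinear map in `M` and `ω`. -/
noncomputable def response :
    Matrix (V × B) (V × B) ℂ →ₗ[ℂ] Matrix V V ℂ →ₗ[ℂ] Matrix B B ℂ :=
  LinearMap.mk₂ ℂ (fun M ω => ptrace₁ (M * (ω ⊗ₖ (1 : Matrix B B ℂ))))
    (fun _ _ _ => by ext; simp [ptrace₁, add_mul, Finset.sum_add_distrib])
    (fun _ _ _ => by ext; simp [ptrace₁, Finset.mul_sum])
    (fun _ _ _ => by ext; simp [ptrace₁, add_kronecker, mul_add, Finset.sum_add_distrib])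
    (fun _ _ _ => by ext; simp [ptrace₁, smul_kronecker, Finset.mul_sum])

theorem response_apply (M : Matrix (V × B) (V × B) ℂ) (ω : Matrix V V ℂ) :
    response M ω = ptrace₁ (M * (ω ⊗ₖ (1 : Matrix B B ℂ))) := rfl

theorem response_apply_apply (M : Matrix (V × B) (V × B) ℂ) (ω : Matrix V V ℂ) (b b' : B) :
    response M ω b b' = ∑ v, ∑ v', M (v, b) (v', b') * ω v' v := by
  simp [response_apply, ptrace₁, mul_apply, Fintype.sum_prod_type, one_apply]

theorem response_one_kronecker [DecidableEq V] (N : Matrix B B ℂ) (ω : Matrix V V ℂ) :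
    response (1 ⊗ₖ N) ω = ω.trace • N := by
  rw [response_apply, ← mul_kronecker_mul, one_mul, mul_one, ptrace₁_kronecker]

theorem response_one [DecidableEq V] (ω : Matrix V V ℂ) :
    response (1 : Matrix (V × B) (V × B) ℂ) ω = ω.trace • 1 := by
  rw [← one_kronecker_one, response_one_kronecker]

theorem response_injective :
    Function.Injective (response : Matrix (V × B) (V × B) ℂ →ₗ[ℂ] _) := by
  classical
  intro M N hMN
  ext ⟨v, b⟩ ⟨v', b'⟩
  simpa [response_apply_apply, single_apply, ite_and] using
    congr_fun₂ (LinearMap.congr_fun hMN (single v' v 1)) b b'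

end Response

theorem TomoComplete.span_eq_top {V X : Type*} [Fintype V] {ω : X → Matrix V V ℂ}
    (hω : TomoComplete ω) : Submodule.span ℂ (Set.range ω) = ⊤ := by
  have hermitian_mem (H : Matrix V V ℂ) (hH : H.IsHermitian) :
      H ∈ Submodule.span ℂ (Set.range ω) :=
    Submodule.span_subset_span ℝ ℂ _ (hω H hH)
  refine Submodule.eq_top_iff'.2 fun H => ?_
  rw [← realPart_add_I_smul_imaginaryPart H]
  exact add_mem (hermitian_mem _ (realPart H).2)
    (Submodule.smul_mem _ _ (hermitian_mem _ (imaginaryPart H).2))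

theorem TomoComplete.eq_of_response_eq {V B X : Type*} [Fintype V] [Fintype B]
    [DecidableEq B] {ω : X → Matrix V V ℂ} (hω : TomoComplete ω)
    {M N : Matrix (V × B) (V × B) ℂ} (hMN : ∀ x, response M (ω x) = response N (ω x)) : M = N :=
  response_injective <| LinearMap.ext_on_range hω.span_eq_top hMN

theorem linearMap_ext_kronecker {R E l m n p : Type*} [CommSemiring R] [AddCommMonoid E]
    [Module R E] [Finite l] [Finite m] [Finite n] [Finite p]
    {f g : Matrix (l × n) (m × p) R →ₗ[R] E}
    (h : ∀ (τ : Matrix l m R) (χ : Matrix n p R), f (τ ⊗ₖ χ) = g (τ ⊗ₖ χ)) : f = g := by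
  classical
  refine ext_linearMap R fun ⟨i, b⟩ ⟨j, b'⟩ => LinearMap.ext_ring ?_
  simpa [single_kronecker_single] using h (single i j 1) (single b b' 1)

section BellTwist

variable {A B : Type*} [Fintype A] [Fintype B] [DecidableEq B]

/-- Bob's view of Alice's Bell outcome `W`: the map `M ↦ (W ⊗ 1) M^{T_A} (W† ⊗ 1)`. When they
share `ρ`, the outcome `W` acts on `V ⊗ B` as the channel POVM element `bellTwist W ρ / d`. -/
noncomputable def bellTwist (W : Matrix A A ℂ) :
    Matrix (A × B) (A × B) ℂ →ₗ[ℂ] Matrix (A × B) (A × B) ℂ where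
  toFun M := (W ⊗ₖ (1 : Matrix B B ℂ)) * ptranspose₁ M * (Wᴴ ⊗ₖ (1 : Matrix B B ℂ))
  map_add' M N := by
    rw [show ptranspose₁ (M + N) = ptranspose₁ M + ptranspose₁ N from rfl, mul_add, add_mul]
  map_smul' c M := by
    rw [show ptranspose₁ (c • M) = c • ptranspose₁ M from rfl, mul_smul_comm, smul_mul_assoc,
      RingHom.id_apply]

theorem bellTwist_kronecker (W τ : Matrix A A ℂ) (χ : Matrix B B ℂ) :
    bellTwist W (τ ⊗ₖ χ) = (W * τᵀ * Wᴴ) ⊗ₖ χ := by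
  change (W ⊗ₖ 1) * (τᵀ ⊗ₖ χ) * (Wᴴ ⊗ₖ 1) = _
  rw [← mul_kronecker_mul, ← mul_kronecker_mul, one_mul, mul_one]

theorem bellTwist_apply (W : Matrix A A ℂ) (M : Matrix (A × B) (A × B) ℂ) (i k : A) (b b' : B) :
    bellTwist W M (i, b) (k, b') =
      ∑ j, ∑ l, W i j * star (W k l) * M (l, b) (j, b') := by
  simp only [bellTwist, LinearMap.coe_mk, AddHom.coe_mk, ptranspose₁, mul_apply,
    Fintype.sum_prod_type, kroneckerMap_apply, one_apply, conjTranspose_apply, of_apply]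
  simp only [mul_ite, mul_one, mul_zero, ite_mul, zero_mul, Finset.sum_ite_eq, Finset.sum_ite_eq',
    Finset.mem_univ, if_true, Finset.sum_mul]
  rw [Finset.sum_comm]
  exact Finset.sum_congr rfl fun _ _ => Finset.sum_congr rfl fun _ _ => by ring

theorem Separable.bellTwist {M : Matrix (A × B) (A × B) ℂ} (hM : Separable M)
    (W : Matrix A A ℂ) : Separable (bellTwist W M) := by
  obtain ⟨n, τ, χ, hτ, hχ, rfl⟩ := hM
  exact ⟨n, fun i => W * (τ i)ᵀ * Wᴴ, χ, fun i => (hτ i).transpose.mul_mul_conjTranspose_same W,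
    hχ, by simp only [map_sum, bellTwist_kronecker]⟩

/-- The operator `|ψ⟩⟨ψ|` for `|ψ⟩ = (W ⊗ 1)|Φ+⟩`, whose components are `W i j / √d`; a projector
for unitary `W`. -/
noncomputable def bellProj (W : Matrix A A ℂ) : Matrix (A × A) (A × A) ℂ :=
  (Fintype.card A : ℂ)⁻¹ • vecMulVec (fun p => W p.1 p.2) (fun p => star (W p.1 p.2))

theorem teleA_bellProj (W : Matrix A A ℂ) (ρ : Matrix (A × B) (A × B) ℂ) (ω : Matrix A A ℂ) :
    teleA (bellProj W) ρ ω = (Fintype.card A : ℂ)⁻¹ • response (bellTwist W ρ) ω := by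
  ext b b'
  simp only [Matrix.smul_apply, response_apply_apply, bellTwist_apply]
  simp only [teleA, ptraceVA, bellProj, vecMulVec_apply, of_apply, mul_apply,
    Fintype.sum_prod_type, kroneckerMap_apply, reindex_apply, submatrix_apply,
    Equiv.prodAssoc_symm_apply, one_apply, Matrix.smul_apply, smul_eq_mul]
  simp only [mul_ite, mul_one, mul_zero, ite_mul, zero_mul, Finset.sum_ite_eq,
    Finset.mem_univ, if_true, Finset.sum_mul, Finset.mul_sum]
  refine Finset.sum_congr rfl fun i _ => ?_
  rw [Finset.sum_comm]
  refine Finset.sum_congr rfl fun k _ => ?_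
  exact Finset.sum_congr rfl fun _ _ => Finset.sum_congr rfl fun _ _ => by ring

variable [DecidableEq A]

theorem bellTwist_one {W : Matrix A A ℂ} (hW : W ∈ unitaryGroup A ℂ) :
    bellTwist W (1 : Matrix (A × B) (A × B) ℂ) = 1 := by
  rw [← one_kronecker_one, bellTwist_kronecker, transpose_one, mul_one, ← star_eq_conjTranspose,
    mem_unitaryGroup_iff.1 hW]

theorem bellTwist_transpose_bellTwist {W : Matrix A A ℂ} (hW : W ∈ unitaryGroup A ℂ)
    (M : Matrix (A × B) (A × B) ℂ) : bellTwist Wᵀ (bellTwist W M) = M := by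
  have hconj : Wᵀ * Wᵀᴴ = 1 := by
    rw [conjTranspose_transpose_eq_transpose_conjTranspose, ← transpose_mul,
      ← star_eq_conjTranspose, mem_unitaryGroup_iff'.1 hW, transpose_one]
  suffices bellTwist Wᵀ ∘ₗ bellTwist W = LinearMap.id by
    simpa only [LinearMap.comp_apply, LinearMap.id_apply] using LinearMap.congr_fun this M
  refine linearMap_ext_kronecker fun τ χ => ?_
  calc bellTwist Wᵀ (bellTwist W (τ ⊗ₖ χ))
      = ((Wᵀ * Wᵀᴴ) * τ * (Wᵀ * Wᵀᴴ)) ⊗ₖ χ := by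
        simp only [bellTwist_kronecker, transpose_mul, transpose_transpose, Matrix.mul_assoc,
          conjTranspose_transpose_eq_transpose_conjTranspose]
    _ = τ ⊗ₖ χ := by rw [hconj, one_mul, mul_one]

theorem separable_bellTwist_iff {W : Matrix A A ℂ} (hW : W ∈ unitaryGroup A ℂ)
    {M : Matrix (A × B) (A × B) ℂ} : Separable (bellTwist W M) ↔ Separable M :=
  ⟨fun h => bellTwist_transpose_bellTwist hW M ▸ h.bellTwist Wᵀ, fun h => h.bellTwist W⟩

end BellTwist

section UnitaryErrorBasis

variable {ι A : Type*} [Fintype ι] [Fintype A] [DecidableEq A]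

/-- A unitary error basis: `d²` unitaries on `ℂ^d` that are orthogonal for the Hilbert–Schmidt
inner product. Its Bell projectors `bellProj (U a)` form a full Bell state measurement. The
normalisation `tr (U a† U a) = d` is implied by unitarity. -/
structure IsUnitaryErrorBasis (U : ι → Matrix A A ℂ) : Prop where
  mem_unitaryGroup : ∀ a, U a ∈ unitaryGroup A ℂ
  trace_eq_zero : Pairwise fun a b => ((U a)ᴴ * U b).trace = 0
  card_eq : Fintype.card ι = Fintype.card A ^ 2

namespace IsUnitaryErrorBasis

variable {U : ι → Matrix A A ℂ}

theorem trace_conjTranspose_mul [DecidableEq ι] (hU : IsUnitaryErrorBasis U) (a b : ι) :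
    ((U a)ᴴ * U b).trace = if a = b then (Fintype.card A : ℂ) else 0 := by
  split_ifs with hab
  · rw [hab, ← star_eq_conjTranspose, mem_unitaryGroup_iff'.1 (hU.mem_unitaryGroup b), trace_one]
  · exact hU.trace_eq_zero hab

-- Orthogonality of the rows of a square matrix implies orthogonality of its columns.
theorem sum_mul_star (hU : IsUnitaryErrorBasis U) (i j k l : A) :
    ∑ a, U a i j * star (U a k l) = if i = k ∧ j = l then (Fintype.card A : ℂ) else 0 := by
  classical
  have : Nonempty A := ⟨i⟩
  have hd : (Fintype.card A : ℂ) ≠ 0 := Nat.cast_ne_zero.2 Fintype.card_ne_zero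
  let T : Matrix ι (A × A) ℂ := of fun a p => star (U a p.1 p.2)
  have rows : T * ((Fintype.card A : ℂ)⁻¹ • Tᴴ) = 1 := by
    ext a b
    have hab := hU.trace_conjTranspose_mul a b
    rw [trace_mul_comm] at hab
    simp only [trace, diag_apply, mul_apply, conjTranspose_apply] at hab
    rw [Matrix.mul_smul, Matrix.smul_apply, mul_apply, Fintype.sum_prod_type]
    simp only [T, of_apply, conjTranspose_apply, star_star, mul_comm (star _), hab, one_apply]
    split_ifs <;> simp [hd]
  have columns : ((Fintype.card A : ℂ)⁻¹ • Tᴴ) * T = 1 :=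
    (mul_eq_one_comm_of_card_eq _ _ _ (by rw [hU.card_eq, Fintype.card_prod, sq])).1 rows
  have entry := congr_fun₂ columns (i, j) (k, l)
  rw [Matrix.smul_mul, Matrix.smul_apply, mul_apply, smul_eq_mul, inv_mul_eq_iff_eq_mul₀ hd]
    at entry
  simpa [T, one_apply] using entry

variable {B : Type*} [Fintype B] [DecidableEq B]

theorem sum_bellTwist (hU : IsUnitaryErrorBasis U) (M : Matrix (A × B) (A × B) ℂ) :
    ∑ a, bellTwist (U a) M = (Fintype.card A : ℂ) • ((1 : Matrix A A ℂ) ⊗ₖ ptrace₁ M) := by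
  ext ⟨i, b⟩ ⟨k, b'⟩
  calc (∑ a, bellTwist (U a) M) (i, b) (k, b')
      = ∑ j, ∑ l, (∑ a, U a i j * star (U a k l)) * M (l, b) (j, b') := by
        simp only [Matrix.sum_apply, bellTwist_apply, Finset.sum_mul]
        rw [Finset.sum_comm]
        exact Finset.sum_congr rfl fun _ _ => Finset.sum_comm
    _ = _ := by
        simp only [hU.sum_mul_star]
        by_cases hik : i = k <;> simp [hik, ptrace₁, one_apply, Finset.mul_sum]

end IsUnitaryErrorBasis

end UnitaryErrorBasis

section HeisenbergWeyl

variable {d : ℕ}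

theorem bellPOVM_eq_bellProj (a : Fin d × Fin d) : bellPOVM d a = bellProj (HW d a) := by
  ext ⟨i, j⟩ ⟨k, l⟩
  simp only [bellPOVM, maxEnt, bellProj, vecMulVec_apply, mul_apply, Fintype.sum_prod_type,
    kroneckerMap_apply, one_apply, conjTranspose_apply, of_apply, ite_and, Matrix.smul_apply,
    Fintype.card_fin, mul_ite, ite_mul, mul_one, mul_zero, zero_mul, Finset.sum_ite_irrel,
    Finset.sum_const_zero, Finset.sum_ite_eq, Finset.sum_ite_eq', Finset.mem_univ, if_true,
    smul_eq_mul]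
  ring

theorem star_pow_mul_pow_self {ζ : ℂ} (hζ : IsPrimitiveRoot ζ d) (hd : d ≠ 0) (k : ℕ) :
    star (ζ ^ k) * ζ ^ k = 1 := by
  simp [Complex.conj_mul', hζ.norm'_eq_one hd, ← mul_pow]

theorem sum_star_pow_mul_pow_eq_zero {ζ : ℂ} (hζ : IsPrimitiveRoot ζ d) {m n : ℕ} (hm : m < d)
    (hn : n < d) (hmn : m ≠ n) : ∑ j : Fin d, star (ζ ^ (j * m : ℕ)) * ζ ^ (j * n : ℕ) = 0 := by
  have hw : star (ζ ^ m) * ζ ^ n ≠ 1 := fun h =>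
    hmn <| hζ.pow_inj hm hn <| by
      calc ζ ^ m = (star (ζ ^ m) * ζ ^ n) * ζ ^ m := by rw [h, one_mul]
        _ = (star (ζ ^ m) * ζ ^ m) * ζ ^ n := mul_right_comm _ _ _
        _ = ζ ^ n := by rw [star_pow_mul_pow_self hζ (by lia), one_mul]
  have hwd : (star (ζ ^ m) * ζ ^ n) ^ d = 1 := by
    rw [mul_pow, ← star_pow, pow_right_comm, pow_right_comm ζ n, hζ.pow_eq_one]
    simp
  calc ∑ j : Fin d, star (ζ ^ (j * m : ℕ)) * ζ ^ (j * n : ℕ)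
      = ∑ j ∈ Finset.range d, (star (ζ ^ m) * ζ ^ n) ^ j := by
        rw [← Fin.sum_univ_eq_sum_range]
        simp only [mul_pow, ← star_pow, ← pow_mul, mul_comm]
    _ = 0 := by rw [geom_sum_eq hw, hwd, sub_self, zero_div]

theorem shiftX_pow_apply (m : ℕ) (i j : Fin d) :
    (shiftX d ^ m) i j = if (i : ℕ) = (j + m) % d then 1 else 0 := by
  induction m generalizing i j with
  | zero => simp [one_apply, Nat.mod_eq_of_lt j.2, Fin.ext_iff]
  | succ m ih =>
    have hstep (k : Fin d) :
        shiftX d k j = if k = ⟨(j + 1) % d, Nat.mod_lt _ i.pos⟩ then 1 else 0 := by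
      simp [shiftX, Fin.ext_iff]
    simp [pow_succ, mul_apply, ih, hstep, add_assoc, add_comm 1 m]

variable [NeZero d]

theorem exists_isPrimitiveRoot_HW_apply : ∃ ζ : ℂ, IsPrimitiveRoot ζ d ∧
    ∀ (a : Fin d × Fin d) (i j : Fin d),
      HW d a i j = if i = j + a.1 then ζ ^ (j * a.2 : ℕ) else 0 := by
  refine ⟨_, Complex.isPrimitiveRoot_exp d (NeZero.ne d), fun a i j => ?_⟩
  have hZ : clockZ d =
      diagonal fun j : Fin d => Complex.exp (2 * Real.pi * Complex.I / d) ^ (j : ℕ) := by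
    ext i j
    rw [clockZ, of_apply, diagonal_apply, ← Complex.exp_nat_mul]
    congr 2
    ring
  rw [HW, hZ, diagonal_pow, mul_diagonal, shiftX_pow_apply]
  simp [Fin.ext_iff, Fin.val_add, pow_mul]

theorem isUnitaryErrorBasis_HW : IsUnitaryErrorBasis (HW d) := by
  obtain ⟨ζ, hζ, hHW⟩ := exists_isPrimitiveRoot_HW_apply (d := d)
  have hentry (a b : Fin d × Fin d) (j l : Fin d) : ((HW d a)ᴴ * HW d b) j l =
      if l + b.1 = j + a.1 then star (ζ ^ (j * a.2 : ℕ)) * ζ ^ (l * b.2 : ℕ) else 0 := by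
    simp only [mul_apply, conjTranspose_apply, hHW, apply_ite star, star_zero, ite_mul, zero_mul,
      Finset.sum_ite_eq', Finset.mem_univ, if_true, mul_ite, mul_zero]
  refine ⟨fun a => mem_unitaryGroup_iff'.2 ?_, fun a b hab => ?_, ?_⟩
  · ext j l
    rw [star_eq_conjTranspose, hentry, one_apply]
    rcases eq_or_ne j l with rfl | hjl
    · rw [if_pos rfl, if_pos rfl, star_pow_mul_pow_self hζ (NeZero.ne d)]
    · simp [hjl.symm, hjl]
  · simp only [trace, diag_apply, hentry, add_right_inj]
    by_cases h1 : b.1 = a.1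
    · simp only [h1, if_true]
      exact sum_star_pow_mul_pow_eq_zero hζ a.2.2 b.2.2 fun h2 =>
        hab (Prod.ext h1.symm (Fin.ext h2))
    · simp [h1]
  · simp [sq]

end HeisenbergWeyl

section Robustness

variable {ι A B : Type*} [Fintype ι] [Fintype A] [DecidableEq A] [Fintype B] [DecidableEq B]

/-- The state `(ρ + r 1/(d_A d_B)) / (1 + r)` of which `epsR` demands separability. -/
noncomputable def noisyState (r : ℝ) (ρ : Matrix (A × B) (A × B) ℂ) :
    Matrix (A × B) (A × B) ℂ :=
  ((1 + r : ℝ) : ℂ)⁻¹ • (ρ + (r : ℂ) • ((Fintype.card (A × B) : ℂ)⁻¹ • 1))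

/-- The operator `(ρ / d_A + r q 1/d_B) / (1 + r)`, whose image under `bellTwist (U a)` is the
channel POVM element of outcome `a` once white noise of weight `r` and outcome probability `q`
is mixed into the assemblage. -/
noncomputable def noisyBranch (r q : ℝ) (ρ : Matrix (A × B) (A × B) ℂ) :
    Matrix (A × B) (A × B) ℂ :=
  ((1 + r : ℝ) : ℂ)⁻¹ •
    ((Fintype.card A : ℂ)⁻¹ • ρ + ((r * q : ℝ) : ℂ) • ((Fintype.card B : ℂ)⁻¹ • 1))

theorem noisyBranch_uniform (r : ℝ) (ρ : Matrix (A × B) (A × B) ℂ) :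
    noisyBranch r ((Fintype.card A : ℝ) ^ 2)⁻¹ ρ = (Fintype.card A : ℂ)⁻¹ • noisyState r ρ := by
  rw [noisyBranch, noisyState, smul_comm (Fintype.card A : ℂ)⁻¹, smul_add _ ρ, Fintype.card_prod]
  simp only [smul_smul]
  congr 3
  push_cast
  rw [mul_inv]
  ring

theorem sum_noisyBranch [Nonempty A] (hι : Fintype.card ι = Fintype.card A ^ 2) (r : ℝ)
    {p : ι → ℝ} (hp : ∑ a, p a = 1) (ρ : Matrix (A × B) (A × B) ℂ) :
    ∑ a, noisyBranch r (p a) ρ = (Fintype.card A : ℂ) • noisyState r ρ := by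
  have hd : (Fintype.card A : ℂ) ≠ 0 := Nat.cast_ne_zero.2 Fintype.card_ne_zero
  have hweight : ∑ a, ((r * p a : ℝ) : ℂ) = r := by
    rw [← Complex.ofReal_sum, ← Finset.mul_sum, hp, mul_one]
  simp only [noisyBranch, noisyState]
  rw [← Finset.smul_sum, Finset.sum_add_distrib, Finset.sum_const, Finset.card_univ, hι,
    ← Finset.sum_smul, hweight, smul_comm (Fintype.card A : ℂ), smul_add _ ρ, Fintype.card_prod,
    ← Nat.cast_smul_eq_nsmul ℂ]
  simp only [smul_smul]
  congr 3
  · push_cast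
    field_simp
  · push_cast
    field_simp

theorem response_bellTwist_noisyBranch {W : Matrix A A ℂ} (hW : W ∈ unitaryGroup A ℂ)
    {ω : Matrix A A ℂ} (hω : ω.trace = 1) (r q : ℝ) (ρ : Matrix (A × B) (A × B) ℂ) :
    response (bellTwist W (noisyBranch r q ρ)) ω =
      ((1 + r : ℝ) : ℂ)⁻¹ • (teleA (bellProj W) ρ ω +
        ((r * q : ℝ) : ℂ) • ((Fintype.card B : ℂ)⁻¹ • (1 : Matrix B B ℂ))) := by
  simp only [noisyBranch, map_smul, map_add, LinearMap.smul_apply, LinearMap.add_apply,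
    bellTwist_one hW, response_one, hω, one_smul, teleA_bellProj]

theorem sum_eq_one_kronecker_sum_response {M : ι → Matrix (A × B) (A × B) ℂ} {N : Matrix B B ℂ}
    (hM : ∑ a, M a = 1 ⊗ₖ N) {ω : Matrix A A ℂ} (hω : ω.trace = 1) :
    ∑ a, M a = 1 ⊗ₖ ∑ a, response (M a) ω := by
  rw [← LinearMap.sum_apply, ← map_sum, hM, response_one_kronecker, hω, one_smul]

variable [Nonempty A] {U : ι → Matrix A A ℂ}

theorem IsUnitaryErrorBasis.sum_bellTwist_noisyBranch_uniform (hU : IsUnitaryErrorBasis U) (r : ℝ)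
    (ρ : Matrix (A × B) (A × B) ℂ) :
    ∑ a, bellTwist (U a) (noisyBranch r ((Fintype.card A : ℝ) ^ 2)⁻¹ ρ) =
      1 ⊗ₖ ptrace₁ (noisyState r ρ) := by
  rw [noisyBranch_uniform]
  simp only [map_smul]
  rw [← Finset.smul_sum, hU.sum_bellTwist,
    inv_smul_smul₀ (Nat.cast_ne_zero.2 Fintype.card_ne_zero)]

theorem IsUnitaryErrorBasis.sum_uniform (hU : IsUnitaryErrorBasis U) :
    ∑ _a : ι, ((Fintype.card A : ℝ) ^ 2)⁻¹ = 1 := by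
  simp [hU.card_eq]

theorem IsUnitaryErrorBasis.separable_noisyState (hU : IsUnitaryErrorBasis U) {r : ℝ} {p : ι → ℝ}
    (hp : ∑ a, p a = 1) {ρ : Matrix (A × B) (A × B) ℂ}
    (hsep : ∀ a, Separable (bellTwist (U a) (noisyBranch r (p a) ρ))) :
    Separable (noisyState r ρ) := by
  have hsum : Separable ((Fintype.card A : ℂ) • noisyState r ρ) :=
    sum_noisyBranch hU.card_eq r hp ρ ▸
      Separable.sum fun a _ => (separable_bellTwist_iff (hU.mem_unitaryGroup a)).1 (hsep a)
  rw [← inv_smul_smul₀ (Nat.cast_ne_zero.2 Fintype.card_ne_zero : (Fintype.card A : ℂ) ≠ 0)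
    (noisyState r ρ)]
  exact hsum.smul (by positivity)

end Robustness

theorem tauR_eq_epsR_general {ι A B X : Type*} [Fintype ι] [Fintype A] [DecidableEq A]
    [Fintype B] [DecidableEq B] {U : ι → Matrix A A ℂ} (hU : IsUnitaryErrorBasis U)
    {ρ : Matrix (A × B) (A × B) ℂ} (hρ : IsState ρ) {ω : X → Matrix A A ℂ}
    (hω : ∀ x, (ω x).trace = 1) (htomo : TomoComplete ω) :
    tauR ω (fun a x => teleA (bellProj (U a)) ρ (ω x)) = epsR ρ := by
  have : Nonempty A := by
    by_contra hA
    rw [not_nonempty_iff] at hA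
    simpa [trace] using hρ.2
  refine congrArg sInf <| Set.ext fun r => and_congr_right fun _ => ⟨?_, fun hsep => ?_⟩
  · rintro ⟨p, M, -, hp, hM, hresponse, -⟩
    have hM_eq (a : ι) : bellTwist (U a) (noisyBranch r (p a) ρ) = M a :=
      htomo.eq_of_response_eq fun x =>
        (response_bellTwist_noisyBranch (hU.mem_unitaryGroup a) (hω x) r (p a) ρ).trans
          (hresponse a x)
    exact hU.separable_noisyState hp fun a => hM_eq a ▸ (hM a).2
  · have hM (a : ι) :
        Separable (bellTwist (U a) (noisyBranch r ((Fintype.card A : ℝ) ^ 2)⁻¹ ρ)) := by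
      rw [noisyBranch_uniform]
      exact (Separable.smul (by positivity) hsep).bellTwist (U a)
    have hresponse (a : ι) (x : X) := response_bellTwist_noisyBranch (hU.mem_unitaryGroup a)
      (hω x) r ((Fintype.card A : ℝ) ^ 2)⁻¹ ρ
    refine ⟨_, _, fun _ => by positivity, hU.sum_uniform, fun a => ⟨(hM a).posSemidef, hM a⟩,
      fun a x => (hresponse a x).symm, fun x => ?_⟩
    rw [sum_eq_one_kronecker_sum_response (hU.sum_bellTwist_noisyBranch_uniform r ρ) (hω x)]
    simp only [hresponse]
    rw [← Finset.smul_sum, Finset.sum_add_distrib, ← Finset.sum_smul, ← Complex.ofReal_sum,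
      ← Finset.mul_sum, hU.sum_uniform, mul_one]

/-- for a full Bell state measurement and tomographically complete inputs,
τ_r({σ_{a|ω_x}}) = ε_r(ρ^{AB}). -/
theorem tauR_eq_epsR {B X : Type*} [Fintype B] [DecidableEq B]
    (d : ℕ) (hd : 1 ≤ d)
    (ρ : Matrix (Fin d × B) (Fin d × B) ℂ) (hρ : IsState ρ)
    (ω : X → Matrix (Fin d) (Fin d) ℂ) (hω : ∀ x, IsState (ω x))
    (htomo : TomoComplete ω) :
    tauR ω (fun (a : Fin d × Fin d) x => teleA (bellPOVM d a) ρ (ω x)) = epsR ρ := by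
  have : NeZero d := ⟨by lia⟩
  simpa only [bellPOVM_eq_bellProj] using
    tauR_eq_epsR_general isUnitaryErrorBasis_HW hρ (fun x => (hω x).2) htomo

end Tele
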